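/- In the tied braid monoid TB_n^B of type B, for all pairwise distinct i, k, m ∈ {1, …, n} one has η_{i,k} η_{k,m} = η_{i,k} η_{i,m} = η_{k,m} η_{i,m}, where η_{a,b} denotes the generalized tie joining strands a and b (with η_{a,b} = η_{b,a}). -/

import Mathlib

/-! The tied braid monoid of type B, `TBₙᴮ`, presented by generators and relations. -/

/-- Generators of the tied braid monoid of type B on `n` (moving) strands:
`sig i` is `σ_{i+1}`, `sigInv i` is `σ_{i+1}⁻¹`, `rho` is `ρ₁`, `rhoInv` is `ρ₁⁻¹`,
`phi` is `φ₁` and `eta i` is `η_{i+1}` (for `i : Fin (n-1)`). -/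
inductive TBGen (n : ℕ) : Type
  | sig : Fin (n - 1) → TBGen n
  | sigInv : Fin (n - 1) → TBGen n
  | rho : TBGen n
  | rhoInv : TBGen n
  | phi : TBGen n
  | eta : Fin (n - 1) → TBGen n

namespace TiedBraidB

variable (n : ℕ)

/-- The word `σᵢ` (for `1 ≤ i ≤ n-1`; junk value `1` otherwise). -/
def wσ (i : ℕ) : FreeMonoid (TBGen n) :=
  if h : 1 ≤ i ∧ i ≤ n - 1 then FreeMonoid.of (TBGen.sig ⟨i - 1, by omega⟩) else 1

/-- The word `σᵢ⁻¹`. -/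
def wσi (i : ℕ) : FreeMonoid (TBGen n) :=
  if h : 1 ≤ i ∧ i ≤ n - 1 then FreeMonoid.of (TBGen.sigInv ⟨i - 1, by omega⟩) else 1

/-- The word `ηᵢ`. -/
def wη (i : ℕ) : FreeMonoid (TBGen n) :=
  if h : 1 ≤ i ∧ i ≤ n - 1 then FreeMonoid.of (TBGen.eta ⟨i - 1, by omega⟩) else 1

/-- The word `ρ₁`. -/
def wρ : FreeMonoid (TBGen n) := FreeMonoid.of TBGen.rho

/-- The word `ρ₁⁻¹`. -/
def wρi : FreeMonoid (TBGen n) := FreeMonoid.of TBGen.rhoInv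

/-- The word `φ₁`. -/
def wφ : FreeMonoid (TBGen n) := FreeMonoid.of TBGen.phi

/-- The descending word `σₖ σₖ₋₁ ⋯ σ₁`. -/
def wσDesc : ℕ → FreeMonoid (TBGen n)
  | 0 => 1
  | k + 1 => wσ n (k + 1) * wσDesc k

/-- The ascending word `σ₁ σ₂ ⋯ σₖ`. -/
def wσAsc : ℕ → FreeMonoid (TBGen n)
  | 0 => 1
  | k + 1 => wσAsc k * wσ n (k + 1)

/-- The descending word `σₖ⁻¹ σₖ₋₁⁻¹ ⋯ σ₁⁻¹`. -/
def wσiDesc : ℕ → FreeMonoid (TBGen n)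
  | 0 => 1
  | k + 1 => wσi n (k + 1) * wσiDesc k

/-- The ascending word `σ₁⁻¹ σ₂⁻¹ ⋯ σₖ⁻¹`. -/
def wσiAsc : ℕ → FreeMonoid (TBGen n)
  | 0 => 1
  | k + 1 => wσiAsc k * wσi n (k + 1)

/-- The defining relations of the tied braid monoid `TBₙᴮ` of type B. -/
inductive tbRel : FreeMonoid (TBGen n) → FreeMonoid (TBGen n) → Prop
  | sig_inv (i : ℕ) (h1 : 1 ≤ i) (h2 : i ≤ n - 1) :
      tbRel (wσ n i * wσi n i) 1
  | inv_sig (i : ℕ) (h1 : 1 ≤ i) (h2 : i ≤ n - 1) :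
      tbRel (wσi n i * wσ n i) 1
  | rho_inv : tbRel (wρ n * wρi n) 1
  | inv_rho : tbRel (wρi n * wρ n) 1
  | sig_comm (i j : ℕ) (h1 : 1 ≤ i) (h2 : i + 1 < j) (h3 : j ≤ n - 1) :
      tbRel (wσ n i * wσ n j) (wσ n j * wσ n i)
  | sig_braid (i : ℕ) (h1 : 1 ≤ i) (h2 : i + 1 ≤ n - 1) :
      tbRel (wσ n i * wσ n (i + 1) * wσ n i) (wσ n (i + 1) * wσ n i * wσ n (i + 1))
  | rho_sig (i : ℕ) (h1 : 2 ≤ i) (h2 : i ≤ n - 1) :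
      tbRel (wρ n * wσ n i) (wσ n i * wρ n)
  | rho_sig_rho_sig (h : 2 ≤ n) :
      tbRel (wρ n * wσ n 1 * wρ n * wσ n 1) (wσ n 1 * wρ n * wσ n 1 * wρ n)
  | eta_comm (i j : ℕ) (h1 : 1 ≤ i) (h2 : i ≤ n - 1) (h3 : 1 ≤ j) (h4 : j ≤ n - 1) :
      tbRel (wη n i * wη n j) (wη n j * wη n i)
  | eta_sig (i : ℕ) (h1 : 1 ≤ i) (h2 : i ≤ n - 1) :
      tbRel (wη n i * wσ n i) (wσ n i * wη n i)
  | eta_sig_far (i j : ℕ) (h1 : 1 ≤ i) (h2 : i ≤ n - 1) (h3 : 1 ≤ j) (h4 : j ≤ n - 1)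
      (h5 : i + 1 < j ∨ j + 1 < i) :
      tbRel (wη n i * wσ n j) (wσ n j * wη n i)
  | eta_sig_sig (i j : ℕ) (h1 : 1 ≤ i) (h2 : i ≤ n - 1) (h3 : 1 ≤ j) (h4 : j ≤ n - 1)
      (h5 : j = i + 1 ∨ i = j + 1) :
      tbRel (wη n i * wσ n j * wσ n i) (wσ n j * wσ n i * wη n j)
  | eta_sig_sigInv (i j : ℕ) (h1 : 1 ≤ i) (h2 : i ≤ n - 1) (h3 : 1 ≤ j) (h4 : j ≤ n - 1)
      (h5 : j = i + 1 ∨ i = j + 1) :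
      tbRel (wη n i * wσ n j * wσi n i) (wσ n j * wσi n i * wη n j)
  | eta_eta_sig (i j : ℕ) (h1 : 1 ≤ i) (h2 : i ≤ n - 1) (h3 : 1 ≤ j) (h4 : j ≤ n - 1)
      (h5 : j = i + 1 ∨ i = j + 1) :
      tbRel (wη n i * wη n j * wσ n i) (wσ n i * wη n i * wη n j)
  | eta_eta_sig' (i j : ℕ) (h1 : 1 ≤ i) (h2 : i ≤ n - 1) (h3 : 1 ≤ j) (h4 : j ≤ n - 1)
      (h5 : j = i + 1 ∨ i = j + 1) :
      tbRel (wη n i * wη n j * wσ n i) (wη n j * wσ n i * wη n j)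
  | eta_idem (i : ℕ) (h1 : 1 ≤ i) (h2 : i ≤ n - 1) :
      tbRel (wη n i * wη n i) (wη n i)
  | phi_idem : tbRel (wφ n * wφ n) (wφ n)
  | rho_eta (i : ℕ) (h1 : 1 ≤ i) (h2 : i ≤ n - 1) :
      tbRel (wρ n * wη n i) (wη n i * wρ n)
  | rho_phi : tbRel (wρ n * wφ n) (wφ n * wρ n)
  | phi_eta (i : ℕ) (h1 : 1 ≤ i) (h2 : i ≤ n - 1) :
      tbRel (wφ n * wη n i) (wη n i * wφ n)
  | phi_sig (i : ℕ) (h1 : 2 ≤ i) (h2 : i ≤ n - 1) :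
      tbRel (wφ n * wσ n i) (wσ n i * wφ n)
  | phi_move (i : ℕ) (h1 : 2 ≤ i) (h2 : i ≤ n) :
      tbRel (wσDesc n (i - 1) * wφ n * wσiAsc n (i - 1))
        (wσiDesc n (i - 1) * wφ n * wσAsc n (i - 1))
  | phi_eta_one (h : 2 ≤ n) :
      tbRel (wφ n * wη n 1) (wφ n * wσ n 1 * wφ n * wσi n 1)
  | phi_eta_one' (h : 2 ≤ n) :
      tbRel (wφ n * wσ n 1 * wφ n * wσi n 1) (wσ n 1 * wφ n * wσi n 1 * wη n 1)

/-- The tied braid monoid of type B on `n` strands. -/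
def TB : Type := (conGen (tbRel n)).Quotient

instance : Monoid (TB n) := inferInstanceAs (Monoid (conGen (tbRel n)).Quotient)

/-- The canonical projection from the free monoid on the generators onto `TBₙᴮ`. -/
def mk : FreeMonoid (TBGen n) →* TB n := Con.mk' _

/-- The generator `σᵢ` of `TBₙᴮ`. -/
def σB (i : ℕ) : TB n := mk n (wσ n i)

/-- The generator `σᵢ⁻¹` of `TBₙᴮ`. -/
def σiB (i : ℕ) : TB n := mk n (wσi n i)

/-- The generator `ρ₁` of `TBₙᴮ`. -/
def ρB : TB n := mk n (wρ n)

/-- The generator `ρ₁⁻¹` of `TBₙᴮ`. -/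
def ρiB : TB n := mk n (wρi n)

/-- The generator `φ₁` of `TBₙᴮ`. -/
def φB : TB n := mk n (wφ n)

/-- The generator `ηᵢ` of `TBₙᴮ`. -/
def ηB (i : ℕ) : TB n := mk n (wη n i)

/-- The word `σᵢ σᵢ₊₁ ⋯ σₖ` (empty if `k < i`). -/
def wσRange (i k : ℕ) : FreeMonoid (TBGen n) :=
  ((List.range' i (k + 1 - i)).map (wσ n)).prod

/-- The word `σₖ⁻¹ σₖ₋₁⁻¹ ⋯ σᵢ⁻¹` (empty if `k < i`). -/
def wσiRangeRev (i k : ℕ) : FreeMonoid (TBGen n) :=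
  ((List.range' i (k + 1 - i)).reverse.map (wσi n)).prod

/-- The word representing the generalized tie `η_{i,j}`:
`σᵢ ⋯ σ_{j-2} η_{j-1} σ_{j-2}⁻¹ ⋯ σᵢ⁻¹` for `i < j`, with the conventions
`η_{i,i} = 1` and `η_{j,i} = η_{i,j}`. -/
def wηg (i j : ℕ) : FreeMonoid (TBGen n) :=
  if i = j then 1
  else wσRange n (min i j) (max i j - 2) * wη n (max i j - 1) *
    wσiRangeRev n (min i j) (max i j - 2)

/-- The word representing the generalized tie `φⱼ = σ_{j-1} ⋯ σ₁ φ₁ σ₁⁻¹ ⋯ σ_{j-1}⁻¹`. -/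
def wφg (j : ℕ) : FreeMonoid (TBGen n) :=
  wσDesc n (j - 1) * wφ n * wσiAsc n (j - 1)

/-- The generalized tie `η_{i,j}` joining the `i`-th and `j`-th moving strands. -/
def ηg (i j : ℕ) : TB n := mk n (wηg n i j)

/-- The generalized tie `φⱼ` joining the fixed strand and the `j`-th moving strand. -/
def φg (j : ℕ) : TB n := mk n (wφg n j)

end TiedBraidB

/-!
Every `σᵢ` is a unit (out-of-range letters are `1`), so it acts on the monoid by conjugation. This
moves one end of a generalized tie at a time: `σᵢ` carries `η_{i+1,j}` to `η_{i,j}`, `σⱼ` carries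
`η_{i,j+1}` to `η_{i,j}`, and `σₗ` fixes `η_{i,j}` when both `l` and `l + 1` lie outside `[i, j]`.
So the triple `(η_{i,k}, η_{k,m}, η_{i,m})` with `i < k < m` is simultaneously conjugate to one
with consecutive strands, for which the products agree by the defining relations. Since the three
ties also commute, the claim does not depend on the order of `i`, `k`, `m`.
-/

namespace TiedBraidB

section Monoid

variable {M : Type*} [Monoid M] {a b c d a' b' c' d' : M}

/-- Three pairwise commuting elements whose three pairwise products coincide, as do the ties
joining any two of three given strands. -/
structure IsTieTriangle (a b c : M) : Prop where
  commute₁₂ : Commute a b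
  commute₁₃ : Commute a c
  commute₂₃ : Commute b c
  mul₁₂_eq_mul₁₃ : a * b = a * c
  mul₁₃_eq_mul₂₃ : a * c = b * c

theorem IsTieTriangle.swap₁₂ (h : IsTieTriangle a b c) : IsTieTriangle b a c where
  commute₁₂ := h.commute₁₂.symm
  commute₁₃ := h.commute₂₃
  commute₂₃ := h.commute₁₃
  mul₁₂_eq_mul₁₃ := h.commute₁₂.eq.symm.trans (h.mul₁₂_eq_mul₁₃.trans h.mul₁₃_eq_mul₂₃)
  mul₁₃_eq_mul₂₃ := h.mul₁₃_eq_mul₂₃.symm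

theorem IsTieTriangle.swap₂₃ (h : IsTieTriangle a b c) : IsTieTriangle a c b where
  commute₁₂ := h.commute₁₃
  commute₁₃ := h.commute₁₂
  commute₂₃ := h.commute₂₃.symm
  mul₁₂_eq_mul₁₃ := h.mul₁₂_eq_mul₁₃.symm
  mul₁₃_eq_mul₂₃ := h.mul₁₂_eq_mul₁₃.trans (h.mul₁₃_eq_mul₂₃.trans h.commute₂₃.eq)

theorem eq_of_semiconjBy_units (u : Mˣ) (hb : SemiconjBy ↑u a b) (hc : SemiconjBy ↑u a c) :
    b = c :=
  u.mul_left_inj.1 (hb.eq.symm.trans hc.eq)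

theorem mul_eq_mul_of_semiconjBy_units (u : Mˣ) (ha : SemiconjBy ↑u a a')
    (hb : SemiconjBy ↑u b b') (hc : SemiconjBy ↑u c c') (hd : SemiconjBy ↑u d d')
    (h : a * b = c * d) : a' * b' = c' * d' :=
  eq_of_semiconjBy_units u (ha.mul_right hb) (h ▸ hc.mul_right hd)

theorem IsTieTriangle.conj (h : IsTieTriangle a b c) (u : Mˣ)
    (ha : SemiconjBy ↑u a a') (hb : SemiconjBy ↑u b b') (hc : SemiconjBy ↑u c c') :
    IsTieTriangle a' b' c' where
  commute₁₂ := mul_eq_mul_of_semiconjBy_units u ha hb hb ha h.commute₁₂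
  commute₁₃ := mul_eq_mul_of_semiconjBy_units u ha hc hc ha h.commute₁₃
  commute₂₃ := mul_eq_mul_of_semiconjBy_units u hb hc hc hb h.commute₂₃
  mul₁₂_eq_mul₁₃ := mul_eq_mul_of_semiconjBy_units u ha hb ha hc h.mul₁₂_eq_mul₁₃
  mul₁₃_eq_mul₂₃ := mul_eq_mul_of_semiconjBy_units u ha hc hb hc h.mul₁₃_eq_mul₂₃

theorem isTieTriangle_of_semiconjBy_swap (u : Mˣ) (hab : Commute a b) (hua : Commute ↑u a)
    (huab : Commute ↑u (a * b)) (hbub : a * b * u = b * u * b)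
    (hbc : SemiconjBy ↑u b c) (hcb : SemiconjBy ↑u c b) : IsTieTriangle a b c := by
  have hac : a * c = a * b := eq_of_semiconjBy_units u (SemiconjBy.mul_right hua hbc) huab
  have hca : c * a = a * b := eq_of_semiconjBy_units u (hbc.mul_right hua) (hab.eq ▸ huab)
  have hbc' : b * c = a * b := u.mul_left_inj.1 <| by
    rw [mul_assoc, ← hbc.eq, ← mul_assoc, hbub]
  have hcb' : c * b = a * b := u.mul_right_inj.1 <| by
    rw [← mul_assoc, hcb.eq, ← hbub, huab.eq]
  exact ⟨hab, hac.trans hca.symm, hbc'.trans hcb'.symm, hac.symm, hac.trans hbc'.symm⟩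

end Monoid

variable {n i j k l m : ℕ}

theorem mk_eq_mk_of_tbRel {v w : FreeMonoid (TBGen n)} (h : tbRel n v w) : mk n v = mk n w :=
  (Con.eq _).2 (ConGen.Rel.of _ _ h)

theorem σB_eq_one (h : ¬(1 ≤ i ∧ i ≤ n - 1)) : σB n i = 1 := by
  rw [σB, wσ, dif_neg h, map_one]

theorem σiB_eq_one (h : ¬(1 ≤ i ∧ i ≤ n - 1)) : σiB n i = 1 := by
  rw [σiB, wσi, dif_neg h, map_one]

theorem ηB_eq_one (h : ¬(1 ≤ i ∧ i ≤ n - 1)) : ηB n i = 1 := by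
  rw [ηB, wη, dif_neg h, map_one]

theorem σB_mul_σiB (n i : ℕ) : σB n i * σiB n i = 1 := by
  by_cases hi : 1 ≤ i ∧ i ≤ n - 1
  · exact mk_eq_mk_of_tbRel (.sig_inv i hi.1 hi.2)
  · rw [σB_eq_one hi, σiB_eq_one hi, mul_one]

theorem σiB_mul_σB (n i : ℕ) : σiB n i * σB n i = 1 := by
  by_cases hi : 1 ≤ i ∧ i ≤ n - 1
  · exact mk_eq_mk_of_tbRel (.inv_sig i hi.1 hi.2)
  · rw [σB_eq_one hi, σiB_eq_one hi, mul_one]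

/-- The generator `σᵢ` as a unit of `TBₙᴮ` with inverse `σᵢ⁻¹`, used to conjugate ties. It is
defined for all `i`, and equal to `1` for `i` outside `{1, …, n - 1}`. -/
def σUnit (n i : ℕ) : (TB n)ˣ := ⟨σB n i, σiB n i, σB_mul_σiB n i, σiB_mul_σB n i⟩

theorem σUnit_eq_one (h : ¬(1 ≤ i ∧ i ≤ n - 1)) : σUnit n i = 1 :=
  Units.ext (σB_eq_one h)

theorem commute_σUnit_σUnit (h : i + 1 < j) :
    Commute (σUnit n i : TB n) (σUnit n j) := by
  by_cases hi : 1 ≤ i ∧ i ≤ n - 1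
  · by_cases hj : 1 ≤ j ∧ j ≤ n - 1
    · exact mk_eq_mk_of_tbRel (.sig_comm i j hi.1 h hj.2)
    · simp [σUnit_eq_one hj]
  · simp [σUnit_eq_one hi]

theorem commute_σUnit_ηB (h : i + 1 < l ∨ l + 1 < i) : Commute (σUnit n l : TB n) (ηB n i) := by
  by_cases hi : 1 ≤ i ∧ i ≤ n - 1
  · by_cases hl : 1 ≤ l ∧ l ≤ n - 1
    · exact (mk_eq_mk_of_tbRel (.eta_sig_far i l hi.1 hi.2 hl.1 hl.2 h)).symm
    · simp [σUnit_eq_one hl]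
  · simp [ηB_eq_one hi]

theorem ηg_comm (n i j : ℕ) : ηg n i j = ηg n j i := by
  simp only [ηg, wηg, min_comm, max_comm, eq_comm]

theorem ηg_succ_right (hi : 1 ≤ i) : ηg n i (i + 1) = ηB n i := by
  have hlen : i - 1 + 1 - i = 0 := by omega
  simp [ηg, wηg, ηB, wσRange, wσiRangeRev, hlen]

theorem ηg_eq_conj_ηg_succ_left (hij : i + 1 < j) :
    ηg n i j = σUnit n i * ηg n (i + 1) j * ↑(σUnit n i)⁻¹ := by
  have hlen : j - 2 + 1 - i = (j - 2 + 1 - (i + 1)) + 1 := by omega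
  have hmin : min i j = i := by omega
  have hmax : max i j = j := by omega
  have hmin' : min (i + 1) j = i + 1 := by omega
  have hmax' : max (i + 1) j = j := by omega
  have hσ : mk n (wσRange n i (j - 2)) = σUnit n i * mk n (wσRange n (i + 1) (j - 2)) := by
    rw [wσRange, hlen, List.range'_succ, List.map_cons, List.prod_cons, map_mul]
    rfl
  have hσi : mk n (wσiRangeRev n i (j - 2)) =
      mk n (wσiRangeRev n (i + 1) (j - 2)) * ↑(σUnit n i)⁻¹ := by
    rw [wσiRangeRev, hlen, List.range'_succ, List.reverse_cons, List.map_append,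
      List.prod_append, map_mul, List.map_singleton, List.prod_singleton]
    rfl
  simp only [ηg, wηg, if_neg (show i ≠ j by omega), if_neg hij.ne, hmin, hmax, hmin', hmax',
    map_mul, hσ, hσi, mul_assoc]

theorem semiconjBy_σUnit_ηg_left (hij : i + 1 < j) :
    SemiconjBy (σUnit n i : TB n) (ηg n (i + 1) j) (ηg n i j) :=
  ηg_eq_conj_ηg_succ_left (n := n) hij ▸ Units.mk_semiconjBy _ _

theorem commute_σUnit_ηg (hi : 1 ≤ i) (hij : i < j) (hl : l + 1 < i ∨ j < l) :
    Commute (σUnit n l : TB n) (ηg n i j) := by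
  obtain ⟨j, rfl⟩ := Nat.exists_eq_add_one_of_ne_zero (Nat.ne_zero_of_lt hij)
  refine Nat.decreasingInduction' (P := fun p ↦ Commute (σUnit n l : TB n) (ηg n p (j + 1)))
    (fun p hpj hip ih ↦ ?_) (Nat.le_of_lt_succ hij) ?_
  · have hσ : Commute (σUnit n l : TB n) (σUnit n p) := by
      rcases hl with hl | hl
      · exact commute_σUnit_σUnit (by omega)
      · exact (commute_σUnit_σUnit (by omega)).symm
    rw [ηg_eq_conj_ηg_succ_left (by omega)]
    exact (hσ.mul_right ih).mul_right hσ.units_inv_right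
  · rw [ηg_succ_right (by omega)]
    exact commute_σUnit_ηB (by omega)

theorem semiconjBy_σUnit_succ_ηg_ηB (hi : 1 ≤ i) (hin : i + 1 < n) :
    SemiconjBy (σUnit n (i + 1) : TB n) (ηg n i (i + 2)) (ηB n i) := by
  have hrel : SemiconjBy (σUnit n (i + 1) * σUnit n i : TB n) (ηB n (i + 1)) (ηB n i) := by
    rw [SemiconjBy, ← mul_assoc]
    exact (mk_eq_mk_of_tbRel
      (.eta_sig_sig i (i + 1) hi (by omega) (by omega) (by omega) (.inl rfl))).symm
  have hconj : SemiconjBy (σUnit n i : TB n) (ηB n (i + 1)) (ηg n i (i + 2)) :=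
    ηg_succ_right (n := n) (Nat.le_add_left 1 i) ▸ semiconjBy_σUnit_ηg_left (by omega)
  simpa only [Units.mul_inv_cancel_right] using hrel.mul_left hconj.units_inv_symm_left

theorem semiconjBy_σUnit_ηg_ηB_succ (hi : 1 ≤ i) (hin : i + 1 < n) :
    SemiconjBy (σUnit n i : TB n) (ηg n i (i + 2)) (ηB n (i + 1)) := by
  have hrel : SemiconjBy (σUnit n (i + 1) * ↑(σUnit n i)⁻¹ : TB n) (ηB n (i + 1)) (ηB n i) := by
    rw [SemiconjBy, ← mul_assoc]
    exact (mk_eq_mk_of_tbRel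
      (.eta_sig_sigInv i (i + 1) hi (by omega) (by omega) (by omega) (.inl rfl))).symm
  have hconj := (semiconjBy_σUnit_succ_ηg_ηB hi hin).units_inv_symm_left.mul_left hrel
  rw [Units.inv_mul_cancel_left] at hconj
  exact SemiconjBy.units_inv_symm_left_iff.1 hconj

theorem isTieTriangle_ηg_consecutive (hi : 1 ≤ i) (hin : i + 1 < n) :
    IsTieTriangle (ηg n i (i + 1)) (ηg n (i + 1) (i + 2)) (ηg n i (i + 2)) := by
  have hi' : i ≤ n - 1 := by omega
  have hi1 : 1 ≤ i + 1 := by omega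
  have hin' : i + 1 ≤ n - 1 := by omega
  have hleft : SemiconjBy (σUnit n i : TB n) (ηg n (i + 1) (i + 2)) (ηg n i (i + 2)) :=
    semiconjBy_σUnit_ηg_left (by omega)
  rw [ηg_succ_right hi1] at hleft ⊢
  rw [ηg_succ_right hi]
  refine isTieTriangle_of_semiconjBy_swap (σUnit n i) ?_ ?_ ?_ ?_ hleft
    (semiconjBy_σUnit_ηg_ηB_succ hi hin)
  · exact mk_eq_mk_of_tbRel (.eta_comm i (i + 1) hi hi' hi1 hin')
  · exact (mk_eq_mk_of_tbRel (.eta_sig i hi hi')).symm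
  · exact (mul_assoc _ _ _).symm.trans
      (mk_eq_mk_of_tbRel (.eta_eta_sig i (i + 1) hi hi' hi1 hin' (.inl rfl))).symm
  · exact mk_eq_mk_of_tbRel (.eta_eta_sig' i (i + 1) hi hi' hi1 hin' (.inl rfl))

theorem semiconjBy_σUnit_ηg_right (hi : 1 ≤ i) (hij : i < j) (hjn : j < n) :
    SemiconjBy (σUnit n j : TB n) (ηg n i (j + 1)) (ηg n i j) := by
  obtain ⟨j, rfl⟩ := Nat.exists_eq_add_one_of_ne_zero (Nat.ne_zero_of_lt hij)
  refine Nat.decreasingInduction'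
    (P := fun p ↦ SemiconjBy (σUnit n (j + 1) : TB n) (ηg n p (j + 2)) (ηg n p (j + 1)))
    (fun p hpj _ ih ↦ ?_) (Nat.le_of_lt_succ hij) ?_
  · have hσ : Commute (σUnit n (j + 1) : TB n) (σUnit n p) :=
      (commute_σUnit_σUnit (by omega)).symm
    rw [ηg_eq_conj_ηg_succ_left (i := p) (by omega), ηg_eq_conj_ηg_succ_left (i := p) (by omega)]
    exact (SemiconjBy.mul_right hσ ih).mul_right hσ.units_inv_right
  · rw [ηg_succ_right (i := j) (by omega)]
    exact semiconjBy_σUnit_succ_ηg_ηB (by omega) hjn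

theorem isTieTriangle_ηg_succ (hi : 1 ≤ i) (him : i + 2 ≤ m) (hmn : m ≤ n) :
    IsTieTriangle (ηg n i (i + 1)) (ηg n (i + 1) m) (ηg n i m) := by
  induction m, him using Nat.le_induction with
  | base => exact isTieTriangle_ηg_consecutive hi (by omega)
  | succ m him ih =>
    have hfix : Commute (σUnit n m : TB n) (ηg n i (i + 1)) :=
      commute_σUnit_ηg hi (by omega) (by omega)
    exact (ih (by omega)).conj (σUnit n m)⁻¹ hfix.units_inv_left
      (semiconjBy_σUnit_ηg_right (by omega) (by omega) (by omega)).units_inv_symm_left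
      (semiconjBy_σUnit_ηg_right hi (by omega) (by omega)).units_inv_symm_left

theorem isTieTriangle_ηg_of_lt (hi : 1 ≤ i) (hik : i < k) (hkm : k < m) (hmn : m ≤ n) :
    IsTieTriangle (ηg n i k) (ηg n k m) (ηg n i m) := by
  obtain ⟨k, rfl⟩ := Nat.exists_eq_add_one_of_ne_zero (Nat.ne_zero_of_lt hik)
  refine Nat.decreasingInduction'
    (P := fun p ↦ IsTieTriangle (ηg n p (k + 1)) (ηg n (k + 1) m) (ηg n p m))
    (fun p hpk _ ih ↦ ?_) (Nat.le_of_lt_succ hik) ?_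
  · have hfix : Commute (σUnit n p : TB n) (ηg n (k + 1) m) :=
      commute_σUnit_ηg (by omega) hkm (by omega)
    exact ih.conj (σUnit n p) (semiconjBy_σUnit_ηg_left (by omega)) hfix
      (semiconjBy_σUnit_ηg_left (by omega))
  · exact isTieTriangle_ηg_succ (by omega) hkm hmn

theorem isTieTriangle_ηg (hi : 1 ≤ i) (hin : i ≤ n) (hk : 1 ≤ k) (hkn : k ≤ n) (hm : 1 ≤ m)
    (hmn : m ≤ n) (hik : i ≠ k) (hkm : k ≠ m) (him : i ≠ m) :
    IsTieTriangle (ηg n i k) (ηg n k m) (ηg n i m) := by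
  wlog hlt : i < k generalizing i k
  · rw [ηg_comm n i k]
    exact (this hk hkn hi hin hik.symm him hkm (by omega)).swap₂₃
  rcases hkm.lt_or_gt with hkm | hmk
  · exact isTieTriangle_ηg_of_lt hi hlt hkm hmn
  rw [ηg_comm n k m]
  rcases him.lt_or_gt with him | hmi
  · exact (isTieTriangle_ηg_of_lt hi him hmk hkn).swap₁₂.swap₂₃.swap₁₂
  · rw [ηg_comm n i m]
    exact (isTieTriangle_ηg_of_lt hm hmi hlt hkn).swap₁₂.swap₂₃

end TiedBraidB

open TiedBraidB in
/-- In `TBₙᴮ`, for all pairwise distinct `i, k, m ∈ {1, …, n}` one has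
`η_{i,k} η_{k,m} = η_{i,k} η_{i,m} = η_{k,m} η_{i,m}`. -/
theorem generalizedTies_transitive_products (n i k m : ℕ)
    (hi1 : 1 ≤ i) (hi2 : i ≤ n) (hk1 : 1 ≤ k) (hk2 : k ≤ n) (hm1 : 1 ≤ m) (hm2 : m ≤ n)
    (hik : i ≠ k) (hkm : k ≠ m) (him : i ≠ m) :
    ηg n i k * ηg n k m = ηg n i k * ηg n i m ∧
    ηg n i k * ηg n i m = ηg n k m * ηg n i m := by
  have htriangle := isTieTriangle_ηg hi1 hi2 hk1 hk2 hm1 hm2 hik hkm him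
  exact ⟨htriangle.mul₁₂_eq_mul₁₃, htriangle.mul₁₃_eq_mul₂₃⟩
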